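/- arXiv:2509.09621 — 8 statements merged into one kernel-verified Lean document; each statement's English description precedes it below -/
import Mathlib

section
/- Let φ > 0 and let μ be a probability measure on ℝ² with finite second moment such that Var_μ(θ₁) > 0 or Var_μ(θ₂) > 0. Define v(a,b) = ∫ max(u(a,θ), u(b,θ)) dμ(θ), where u(a,θ) = −φ(a₁−θ₁)² − (a₂−θ₂)². Then there exist a, b ∈ ℝ² with v(a,b) > −φ·Var_μ(θ₁) − Var_μ(θ₂). Consequently any maximizer (a*,b*) of v has a* ≠ b*. -/
open MeasureTheory

lemma abs_mean_pos {Ω : Type*} [MeasurableSpace Ω] (μ : Measure Ω) (X : Ω → ℝ)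
    (hX : Integrable X μ) (h : 0 < ∫ w, X w ^ 2 ∂μ) : 0 < ∫ w, |X w| ∂μ := by
  have h0 : 0 ≤ ∫ w, |X w| ∂μ := integral_nonneg fun w => abs_nonneg _
  refine lt_of_le_of_ne h0 fun h1 => ?_
  have h2 := (integral_eq_zero_iff_of_nonneg (fun w => abs_nonneg (X w)) hX.abs).1 h1.symm
  have h3 : ∫ w, X w ^ 2 ∂μ = 0 := by
    apply integral_eq_zero_of_ae
    filter_upwards [h2] with w hw
    have : X w = 0 := abs_eq_zero.1 hw
    simp [this]
  linarith

lemma max_formula (K c t x : ℝ) (hc : 0 ≤ c) (ht : 0 ≤ t) :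
    max (K - c * (t - x) ^ 2) (K - c * (-t - x) ^ 2)
      = K - c * x ^ 2 - c * t ^ 2 + 2 * c * t * |x| := by
  have hct : 0 ≤ c * t := mul_nonneg hc ht
  rcases le_total 0 x with hx | hx
  · rw [abs_of_nonneg hx, max_eq_left]
    · ring
    · nlinarith [mul_nonneg hct hx]
  · rw [abs_of_nonpos hx, max_eq_right]
    · ring
    · nlinarith [mul_nonneg hct (neg_nonneg.2 hx)]

/-- if the state has positive variance in some dimension, some two-action
scheme strictly beats the babbling payoff `−φ·Var(θ₁) − Var(θ₂)`; consequently any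
maximizer `(a*, b*)` of `v` has `a* ≠ b*`. -/
theorem stmt_4 (φ : ℝ) (hφ : 0 < φ)
    (μ : Measure (ℝ × ℝ)) [IsProbabilityMeasure μ]
    (hmom : Integrable (fun θ : ℝ × ℝ => ‖θ‖ ^ 2) μ)
    (u : (ℝ × ℝ) → (ℝ × ℝ) → ℝ)
    (hu : ∀ a θ : ℝ × ℝ, u a θ = -(φ * (a.1 - θ.1) ^ 2) - (a.2 - θ.2) ^ 2)
    (v : (ℝ × ℝ) → (ℝ × ℝ) → ℝ)
    (hv : ∀ a b : ℝ × ℝ, v a b = ∫ θ, max (u a θ) (u b θ) ∂μ)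
    (m : ℝ × ℝ) (hm : m = ∫ θ, θ ∂μ)
    (V₁ V₂ : ℝ)
    (hV₁ : V₁ = ∫ θ, (θ.1 - m.1) ^ 2 ∂μ)
    (hV₂ : V₂ = ∫ θ, (θ.2 - m.2) ^ 2 ∂μ)
    (hvar : 0 < V₁ ∨ 0 < V₂) :
    (∃ a b : ℝ × ℝ, -(φ * V₁) - V₂ < v a b) ∧
    (∀ astar bstar : ℝ × ℝ,
      (∀ a b : ℝ × ℝ, v a b ≤ v astar bstar) → astar ≠ bstar) := by
  have hmeas : AEStronglyMeasurable (fun θ : ℝ × ℝ => θ) μ := aestronglyMeasurable_id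
  have hL : MemLp (fun θ : ℝ × ℝ => θ) 2 μ := (memLp_two_iff_integrable_sq_norm hmeas).2 hmom
  have hid : Integrable (fun θ : ℝ × ℝ => θ) μ := hL.integrable (by norm_num)
  have hm1 : ∫ θ : ℝ × ℝ, θ.1 ∂μ = m.1 := by rw [hm, fst_integral hid]
  have hm2 : ∫ θ : ℝ × ℝ, θ.2 ∂μ = m.2 := by rw [hm, snd_integral hid]
  have hX : MemLp (fun θ : ℝ × ℝ => θ.1 - m.1) 2 μ := hL.fst.sub (memLp_const m.1)
  have hY : MemLp (fun θ : ℝ × ℝ => θ.2 - m.2) 2 μ := hL.snd.sub (memLp_const m.2)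
  have hXi := hX.integrable (by norm_num)
  have hYi := hY.integrable (by norm_num)
  have hX2 := hX.integrable_sq
  have hY2 := hY.integrable_sq
  have hX0 : ∫ θ : ℝ × ℝ, (θ.1 - m.1) ∂μ = 0 := by
    rw [integral_sub hid.fst (integrable_const _), hm1]; simp
  have hY0 : ∫ θ : ℝ × ℝ, (θ.2 - m.2) ∂μ = 0 := by
    rw [integral_sub hid.snd (integrable_const _), hm2]; simp
  have hbase : Integrable (fun θ : ℝ × ℝ => -(φ * (θ.1 - m.1) ^ 2) - (θ.2 - m.2) ^ 2) μ :=
    (hX2.const_mul φ).neg.sub hY2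
  have hbaseI : ∫ θ : ℝ × ℝ, (-(φ * (θ.1 - m.1) ^ 2) - (θ.2 - m.2) ^ 2) ∂μ
      = -(φ * V₁) - V₂ := by
    rw [integral_sub (hX2.const_mul φ).fun_neg hY2, integral_neg, integral_const_mul, hV₁, hV₂]
  have key : ∃ a b : ℝ × ℝ, -(φ * V₁) - V₂ < v a b := by
    rcases hvar with h | h
    · have hD := abs_mean_pos μ _ hXi (hV₁ ▸ h)
      set D := ∫ θ : ℝ × ℝ, |θ.1 - m.1| ∂μ with hDdef
      refine ⟨(m.1 + D, m.2), (m.1 - D, m.2), ?_⟩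
      have e : ∀ θ : ℝ × ℝ, max (u (m.1 + D, m.2) θ) (u (m.1 - D, m.2) θ)
          = (-(φ * (θ.1 - m.1) ^ 2) - (θ.2 - m.2) ^ 2)
            + (2 * φ * D * |θ.1 - m.1| + -(φ * D ^ 2)) := by
        intro θ
        have := max_formula (-(θ.2 - m.2) ^ 2) φ D (θ.1 - m.1) hφ.le hD.le
        rw [hu, hu]
        convert this using 1
        · congr 1 <;> ring
        · ring
      rw [hv, integral_congr_ae (Filter.Eventually.of_forall e),
        integral_add hbase ((hXi.abs.const_mul _).fun_add (integrable_const _)), hbaseI,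
        integral_add (hXi.abs.const_mul _) (integrable_const _), integral_const_mul, ← hDdef]
      simp only [integral_const, probReal_univ, one_smul]
      nlinarith [mul_pos hφ (mul_pos hD hD)]
    · have hD := abs_mean_pos μ _ hYi (hV₂ ▸ h)
      set D := ∫ θ : ℝ × ℝ, |θ.2 - m.2| ∂μ with hDdef
      refine ⟨(m.1, m.2 + D), (m.1, m.2 - D), ?_⟩
      have e : ∀ θ : ℝ × ℝ, max (u (m.1, m.2 + D) θ) (u (m.1, m.2 - D) θ)
          = (-(φ * (θ.1 - m.1) ^ 2) - (θ.2 - m.2) ^ 2)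
            + (2 * D * |θ.2 - m.2| + -(D ^ 2)) := by
        intro θ
        have := max_formula (-(φ * (θ.1 - m.1) ^ 2)) 1 D (θ.2 - m.2) zero_le_one hD.le
        rw [hu, hu]
        convert this using 1
        · congr 1 <;> ring
        · ring
      rw [hv, integral_congr_ae (Filter.Eventually.of_forall e),
        integral_add hbase ((hYi.abs.const_mul _).fun_add (integrable_const _)), hbaseI,
        integral_add (hYi.abs.const_mul _) (integrable_const _), integral_const_mul, ← hDdef]
      simp only [integral_const, probReal_univ, one_smul]
      nlinarith [mul_pos hD hD]
  refine ⟨key, ?_⟩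
  rintro a _ hmax rfl
  obtain ⟨p, q, hpq⟩ := key
  have h1 := hmax p q
  have e : ∀ θ : ℝ × ℝ, max (u a θ) (u a θ)
      = (-(φ * (θ.1 - m.1) ^ 2) - (θ.2 - m.2) ^ 2)
        + ((2 * φ * (a.1 - m.1) * (θ.1 - m.1) + 2 * (a.2 - m.2) * (θ.2 - m.2))
          + (-(φ * (a.1 - m.1) ^ 2) - (a.2 - m.2) ^ 2)) := by
    intro θ
    rw [max_self, hu]; ring
  have hlin : Integrable (fun θ : ℝ × ℝ =>
      2 * φ * (a.1 - m.1) * (θ.1 - m.1) + 2 * (a.2 - m.2) * (θ.2 - m.2)) μ :=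
    (hXi.const_mul _).add (hYi.const_mul _)
  have h2 : v a a = -(φ * V₁) - V₂ + (-(φ * (a.1 - m.1) ^ 2) - (a.2 - m.2) ^ 2) := by
    rw [hv, integral_congr_ae (Filter.Eventually.of_forall e),
      integral_add hbase (hlin.fun_add (integrable_const _)), hbaseI,
      integral_add hlin (integrable_const _),
      integral_add (hXi.const_mul _) (hYi.const_mul _), integral_const_mul, integral_const_mul,
      hX0, hY0]
    simp only [integral_const, probReal_univ, one_smul]
    ring
  nlinarith [mul_nonneg hφ.le (sq_nonneg (a.1 - m.1)), sq_nonneg (a.2 - m.2)]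
end

section
/- Let φ > 0 and let μ be a probability measure on ℝ², absolutely continuous with respect to Lebesgue measure, with finite second moment. Define u(a,θ) = −φ(a₁−θ₁)² − (a₂−θ₂)² and v(a,b) = ∫ max(u(a,θ), u(b,θ)) dμ(θ). Suppose (a*,b*) maximizes v over ℝ² × ℝ² and a* ≠ b*. Let A = {θ ∈ ℝ² : u(a*,θ) > u(b*,θ)} and B = {θ ∈ ℝ² : u(b*,θ) > u(a*,θ)}. If μ(A) > 0 then a* = (1/μ(A)) ∫_A θ dμ(θ), and if μ(B) > 0 then b* = (1/μ(B)) ∫_B θ dμ(θ). That is, each optimal action equals the conditional mean of the state on the region of states for which it is sent, so the optimal two-message scheme is an equilibrium. -/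
open MeasureTheory

lemma key (φ : ℝ) (hφ : 0 < φ)
    (μ : Measure (ℝ × ℝ)) [IsProbabilityMeasure μ]
    (hmom : Integrable (fun θ : ℝ × ℝ => ‖θ‖ ^ 2) μ)
    (u : (ℝ × ℝ) → (ℝ × ℝ) → ℝ)
    (hu : ∀ a θ : ℝ × ℝ, u a θ = -(φ * (a.1 - θ.1) ^ 2) - (a.2 - θ.2) ^ 2)
    (a b : ℝ × ℝ)
    (hmax : ∀ c : ℝ × ℝ, ∫ θ, max (u c θ) (u b θ) ∂μ ≤ ∫ θ, max (u a θ) (u b θ) ∂μ)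
    (A : Set (ℝ × ℝ)) (hA : A = {θ : ℝ × ℝ | u b θ < u a θ}) (hpos : 0 < μ A) :
    a = (μ A).toReal⁻¹ • ∫ θ in A, θ ∂μ := by
  have hid : MemLp (fun θ : ℝ × ℝ => θ) 2 μ :=
    (memLp_two_iff_integrable_sq_norm measurable_id.aestronglyMeasurable).2 hmom
  have h1 : MemLp (fun θ : ℝ × ℝ => θ.1) 2 μ :=
    hid.mono measurable_fst.aestronglyMeasurable (ae_of_all _ fun θ => norm_fst_le θ)
  have h2 : MemLp (fun θ : ℝ × ℝ => θ.2) 2 μ :=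
    hid.mono measurable_snd.aestronglyMeasurable (ae_of_all _ fun θ => norm_snd_le θ)
  have hui : ∀ c, Integrable (u c) μ := by
    intro c
    have e : u c = fun θ => -(φ * (c.1 - θ.1) ^ 2) - (c.2 - θ.2) ^ 2 := funext (hu c)
    rw [e]
    exact ((((memLp_const c.1).sub h1).integrable_sq).const_mul φ).neg.sub
      (((memLp_const c.2).sub h2).integrable_sq)
  have hum : ∀ c, Measurable (u c) := by
    intro c
    have e : u c = fun θ => -(φ * (c.1 - θ.1) ^ 2) - (c.2 - θ.2) ^ 2 := funext (hu c)
    rw [e]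
    fun_prop
  have hAm : MeasurableSet A := by
    rw [hA]; exact measurableSet_lt (hum b) (hum a)
  have i0 : Integrable (fun θ : ℝ × ℝ => θ) μ := hid.integrable (by norm_num)
  have i1 : Integrable (fun θ : ℝ × ℝ => θ.1) μ := h1.integrable (by norm_num)
  have i2 : Integrable (fun θ : ℝ × ℝ => θ.2) μ := h2.integrable (by norm_num)
  have hp : 0 < (μ A).toReal := ENNReal.toReal_pos hpos.ne' (measure_ne_top _ _)
  set p := (μ A).toReal with hpd
  set m : ℝ × ℝ := p⁻¹ • ∫ θ in A, θ ∂μ with hm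
  have e1 : ∫ θ in A, θ.1 ∂μ = p * m.1 := by
    rw [hm, Prod.smul_fst, fst_integral i0.integrableOn, smul_eq_mul]
    field_simp
  have e2 : ∫ θ in A, θ.2 ∂μ = p * m.2 := by
    rw [hm, Prod.smul_snd, snd_integral i0.integrableOn, smul_eq_mul]
    field_simp
  have hle : ∫ θ in A, (u m θ - u a θ) ∂μ ≤ 0 := by
    rw [← integral_indicator hAm]
    have hI : ∀ c, Integrable (fun θ => max (u c θ) (u b θ)) μ := fun c => (hui c).sup (hui b)
    calc ∫ θ, A.indicator (fun θ => u m θ - u a θ) θ ∂μ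
        ≤ ∫ θ, (max (u m θ) (u b θ) - max (u a θ) (u b θ)) ∂μ := by
          refine integral_mono (((hui m).sub (hui a)).indicator hAm) ((hI m).sub (hI a)) ?_
          intro θ
          by_cases h : θ ∈ A
          · have h' : u b θ < u a θ := by rw [hA] at h; exact h
            simp only [Set.indicator_of_mem h, max_eq_left h'.le]
            linarith [le_max_left (u m θ) (u b θ)]
          · have h' : u a θ ≤ u b θ := by rw [hA] at h; exact not_lt.1 h
            simp only [Set.indicator_of_notMem h, max_eq_right h']
            linarith [le_max_right (u m θ) (u b θ)]
      _ ≤ 0 := by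
          rw [integral_sub (hI m) (hI a)]
          linarith [hmax m]
  have heq : ∫ θ in A, (u m θ - u a θ) ∂μ
      = p * (φ * (a.1 - m.1) ^ 2 + (a.2 - m.2) ^ 2) := by
    have e : (fun θ => u m θ - u a θ) = fun θ : ℝ × ℝ =>
        ((φ * (a.1 ^ 2 - m.1 ^ 2) + (a.2 ^ 2 - m.2 ^ 2)) + (-2 * φ * (a.1 - m.1)) * θ.1)
          + (-2 * (a.2 - m.2)) * θ.2 := by
      funext θ; rw [hu, hu]; ring
    have j1 : IntegrableOn (fun θ : ℝ × ℝ => (-2 * φ * (a.1 - m.1)) * θ.1) A μ :=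
      (i1.const_mul _).integrableOn
    have j2 : IntegrableOn (fun θ : ℝ × ℝ => (-2 * (a.2 - m.2)) * θ.2) A μ :=
      (i2.const_mul _).integrableOn
    have j0 : IntegrableOn (fun _ : ℝ × ℝ =>
        φ * (a.1 ^ 2 - m.1 ^ 2) + (a.2 ^ 2 - m.2 ^ 2)) A μ := (integrable_const _).integrableOn
    have j3 : IntegrableOn (fun θ : ℝ × ℝ =>
        (φ * (a.1 ^ 2 - m.1 ^ 2) + (a.2 ^ 2 - m.2 ^ 2)) + (-2 * φ * (a.1 - m.1)) * θ.1) A μ :=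
      j0.add j1
    rw [e, integral_add j3 j2, integral_add j0 j1, integral_const_mul,
      integral_const_mul, e1, e2, setIntegral_const, smul_eq_mul, measureReal_def, ← hpd]
    ring
  rw [heq] at hle
  have hs : φ * (a.1 - m.1) ^ 2 + (a.2 - m.2) ^ 2 ≤ 0 := by
    by_contra hc
    push Not at hc
    linarith [mul_pos hp hc]
  have q2 : (a.2 - m.2) ^ 2 = 0 :=
    le_antisymm (by nlinarith [mul_nonneg hφ.le (sq_nonneg (a.1 - m.1))]) (sq_nonneg _)
  have q1 : φ * (a.1 - m.1) ^ 2 = 0 :=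
    le_antisymm (by nlinarith [sq_nonneg (a.2 - m.2)]) (by positivity)
  have r1 : (a.1 - m.1) ^ 2 = 0 := (mul_eq_zero.1 q1).resolve_left hφ.ne'
  exact Prod.ext (sub_eq_zero.1 (pow_eq_zero_iff two_ne_zero |>.1 r1))
    (sub_eq_zero.1 (pow_eq_zero_iff two_ne_zero |>.1 q2))

/-- at an optimal two-action scheme `(a*, b*)` with `a* ≠ b*` (for an
absolutely continuous prior), each optimal action equals the conditional mean of the state
on the region of states where it is strictly preferred. -/
theorem stmt_5 (φ : ℝ) (hφ : 0 < φ)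
    (μ : Measure (ℝ × ℝ)) [IsProbabilityMeasure μ]
    (hac : μ ≪ (volume : Measure (ℝ × ℝ)))
    (hmom : Integrable (fun θ : ℝ × ℝ => ‖θ‖ ^ 2) μ)
    (u : (ℝ × ℝ) → (ℝ × ℝ) → ℝ)
    (hu : ∀ a θ : ℝ × ℝ, u a θ = -(φ * (a.1 - θ.1) ^ 2) - (a.2 - θ.2) ^ 2)
    (v : (ℝ × ℝ) → (ℝ × ℝ) → ℝ)
    (hv : ∀ a b : ℝ × ℝ, v a b = ∫ θ, max (u a θ) (u b θ) ∂μ)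
    (astar bstar : ℝ × ℝ)
    (hmax : ∀ a b : ℝ × ℝ, v a b ≤ v astar bstar)
    (hne : astar ≠ bstar)
    (A B : Set (ℝ × ℝ))
    (hA : A = {θ : ℝ × ℝ | u bstar θ < u astar θ})
    (hB : B = {θ : ℝ × ℝ | u astar θ < u bstar θ}) :
    (0 < μ A → astar = (μ A).toReal⁻¹ • ∫ θ in A, θ ∂μ) ∧
    (0 < μ B → bstar = (μ B).toReal⁻¹ • ∫ θ in B, θ ∂μ) := by
  refine ⟨fun h => ?_, fun h => ?_⟩
  · refine key φ hφ μ hmom u hu astar bstar (fun c => ?_) A hA h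
    rw [← hv, ← hv]
    exact hmax _ _
  · refine key φ hφ μ hmom u hu bstar astar (fun c => ?_) B hB h
    have h1 := hmax astar c
    rw [hv, hv] at h1
    simpa only [max_comm] using h1
end

section
/- Say a function s : ℝ² → ℝ satisfies the Intermediate Value Property (IVP) if for all θ, θ' ∈ ℝ² with s(θ') < s(θ) and every m in the interval [s(θ'), s(θ)] that lies in the range of s, there exists θ̃ ∈ ℝ² with s(θ̃) = m and min(θᵢ, θ'ᵢ) ≤ θ̃ᵢ ≤ max(θᵢ, θ'ᵢ) for i = 1, 2. Then no function s : ℝ² → ℝ satisfying the IVP is a bijection. -/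
/-- no function `s : ℝ² → ℝ` satisfying the Intermediate Value Property is a
bijection. -/
theorem stmt_6 (s : ℝ × ℝ → ℝ)
    (hIVP : ∀ θ θ' : ℝ × ℝ, s θ' < s θ →
      ∀ m : ℝ, s θ' ≤ m → m ≤ s θ → m ∈ Set.range s →
        ∃ θt : ℝ × ℝ, s θt = m ∧
          min θ.1 θ'.1 ≤ θt.1 ∧ θt.1 ≤ max θ.1 θ'.1 ∧
          min θ.2 θ'.2 ≤ θt.2 ∧ θt.2 ≤ max θ.2 θ'.2) :
    ¬ Function.Bijective s := by
  rintro ⟨hinj, -⟩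
  have key : ∀ a m b : ℝ × ℝ, s a < s m → s m < s b →
      min b.1 a.1 ≤ m.1 ∧ m.1 ≤ max b.1 a.1 ∧ min b.2 a.2 ≤ m.2 ∧ m.2 ≤ max b.2 a.2 := by
    intro a m b h1 h2
    obtain ⟨t, ht, h⟩ := hIVP b a (h1.trans h2) (s m) h1.le h2.le ⟨m, rfl⟩
    rwa [hinj ht] at h
  -- a corner P of a square with horizontal neighbour Q and vertical neighbour R
  have corner : ∀ x y x' y' : ℝ, x ≠ x' → y ≠ y' →
      ¬ (s (x', y) < s (x, y) ∧ s (x, y') < s (x, y)) := by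
    rintro x y x' y' hx hy ⟨h1, h2⟩
    rcases lt_trichotomy (s (x', y)) (s (x, y')) with h | h | h
    · have := key _ _ _ h h2
      simp at this
      grind
    · have := congrArg Prod.fst (hinj h)
      exact hx this.symm
    · have := key _ _ _ h h1
      simp at this
      grind
  have c1 := corner 0 0 1 1 (by norm_num) (by norm_num)
  have c2 := corner 1 0 0 1 (by norm_num) (by norm_num)
  have c3 := corner 0 1 1 0 (by norm_num) (by norm_num)
  have c4 := corner 1 1 0 0 (by norm_num) (by norm_num)
  have d1 : s (0, 0) ≠ s (1, 0) := fun h => by simpa using hinj h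
  have d2 : s (0, 0) ≠ s (0, 1) := fun h => by simpa using hinj h
  have d3 : s (1, 1) ≠ s (1, 0) := fun h => by simpa using hinj h
  have d4 : s (1, 1) ≠ s (0, 1) := fun h => by simpa using hinj h
  grind
end

section
/- For all positive real numbers a, b, c, d: 2·min( ac/(a+c), bd/(b+d) ) ≤ ab/(a+b) + cd/(c+d). -/
lemma pool_aux (x y : ℝ) (hx : 0 < x) (hy : 0 < y) : x * y / (x + y) = 1 / (1 / x + 1 / y) := by
  field_simp
  ring

lemma harm_aux (X Y M : ℝ) (hX : 0 < X) (hY : 0 < Y) (hM : 0 < M) (h : X + Y ≤ 2 * M) :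
    2 * (1 / M) ≤ 1 / X + 1 / Y := by
  have h1 : 2 * (1 / M) ≤ 4 / (X + Y) := by
    rw [mul_one_div, div_le_div_iff₀ hM (by positivity)]
    linarith
  have h2 : 4 / (X + Y) ≤ 1 / X + 1 / Y := by
    rw [div_add_div _ _ hX.ne' hY.ne', div_le_div_iff₀ (by positivity) (by positivity)]
    nlinarith [sq_nonneg (X - Y)]
  exact h1.trans h2

/-- Remark 1: pooling along the better diagonal is weakly better than
pooling the two side pairs: `2·min(ac/(a+c), bd/(b+d)) ≤ ab/(a+b) + cd/(c+d)`. -/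
theorem stmt_9 (a b c d : ℝ) (ha : 0 < a) (hb : 0 < b) (hc : 0 < c) (hd : 0 < d) :
    2 * min (a * c / (a + c)) (b * d / (b + d)) ≤ a * b / (a + b) + c * d / (c + d) := by
  rw [pool_aux a c ha hc, pool_aux b d hb hd, pool_aux a b ha hb, pool_aux c d hc hd]
  have hp := one_div_pos.mpr ha
  have hq := one_div_pos.mpr hb
  have hr := one_div_pos.mpr hc
  have hs := one_div_pos.mpr hd
  rcases le_total (1 / a + 1 / c) (1 / b + 1 / d) with h | h
  · refine (mul_le_mul_of_nonneg_left (min_le_right _ _) zero_le_two).trans ?_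
    exact harm_aux _ _ _ (by positivity) (by positivity) (by positivity) (by linarith)
  · refine (mul_le_mul_of_nonneg_left (min_le_left _ _) zero_le_two).trans ?_
    exact harm_aux _ _ _ (by positivity) (by positivity) (by positivity) (by linarith)
end

section
/- Let a, b, c, d be positive real numbers with d ≥ a, d ≥ b, d ≥ c, and b < c. Then ab/(a+b) + cd/(c+d) > 2·min( ac/(a+c), bd/(b+d) ). -/
/-- Lemma 2: if `d` is the largest mass and `b < c`, side pooling is
strictly worse than the better of the two diagonal poolings. -/
theorem stmt_11 (a b c d : ℝ) (ha : 0 < a) (hb : 0 < b) (hc : 0 < c) (hd : 0 < d)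
    (hda : a ≤ d) (hdb : b ≤ d) (hdc : c ≤ d) (hbc : b < c) :
    2 * min (a * c / (a + c)) (b * d / (b + d)) < a * b / (a + b) + c * d / (c + d) := by
  have h1 := min_le_left (a * c / (a + c)) (b * d / (b + d))
  have h2 := min_le_right (a * c / (a + c)) (b * d / (b + d))
  rcases hda.eq_or_lt with rfl | hlt
  · have h3 : b * a / (b + a) < c * a / (c + a) := by
      rw [div_lt_div_iff₀ (by positivity) (by positivity)]
      nlinarith [mul_pos (mul_pos ha ha) (sub_pos.2 hbc)]
    have h4 : a * b / (a + b) = b * a / (b + a) := by rw [mul_comm, add_comm]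
    linarith
  · have e1 : c * d / (c + d) - a * c / (a + c) = (d - a) * (c / (c + d) * (c / (c + a))) := by
      field_simp
      ring
    have e2 : b * d / (b + d) - a * b / (a + b) = (d - a) * (b / (b + d) * (b / (b + a))) := by
      field_simp
      ring
    have key : ∀ t : ℝ, 0 < t → b / (b + t) < c / (c + t) := by
      intro t ht
      rw [div_lt_div_iff₀ (by positivity) (by positivity)]
      nlinarith [mul_pos ht (sub_pos.2 hbc)]
    have h5 : b / (b + d) * (b / (b + a)) < c / (c + d) * (c / (c + a)) :=
      mul_lt_mul'' (key d hd) (key a ha) (by positivity) (by positivity)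
    have h6 := mul_lt_mul_of_pos_left h5 (sub_pos.2 hlt)
    linarith
end

section
/- Let p, q > 0 and set m* = (p/(p+q), q/(p+q)) ∈ ℝ². Define u(a,θ) = −(a₁−θ₁)² − (a₂−θ₂)² for a, θ ∈ ℝ², and let A = {(0,0), (1,1), m*} ⊆ ℝ². Then the following are equivalent: (i) for every a ∈ A, u(m*, (1,0)) ≥ u(a, (1,0)), u(m*, (0,1)) ≥ u(a, (0,1)), u((0,0), (0,0)) ≥ u(a, (0,0)), and u((1,1), (1,1)) ≥ u(a, (1,1)); (ii) √2 − 1 ≤ p/q ≤ 1/(√2 − 1). -/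
/-- Remark 2: the diagonal score on `{0,1}²` pooling `(1,0)` and `(0,1)`
(with posterior mean `m* = (p/(p+q), q/(p+q))`, `p = f(1,0)`, `q = f(0,1)`) is incentive
compatible iff `√2 − 1 ≤ p/q ≤ 1/(√2 − 1)`. -/
theorem stmt_12 (p q : ℝ) (hp : 0 < p) (hq : 0 < q)
    (mstar : ℝ × ℝ) (hm : mstar = (p / (p + q), q / (p + q)))
    (u : (ℝ × ℝ) → (ℝ × ℝ) → ℝ)
    (hu : ∀ a θ : ℝ × ℝ, u a θ = -(a.1 - θ.1) ^ 2 - (a.2 - θ.2) ^ 2)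
    (A : Set (ℝ × ℝ)) (hA : A = {((0 : ℝ), (0 : ℝ)), ((1 : ℝ), (1 : ℝ)), mstar}) :
    (∀ a ∈ A,
        u a ((1 : ℝ), (0 : ℝ)) ≤ u mstar ((1 : ℝ), (0 : ℝ)) ∧
        u a ((0 : ℝ), (1 : ℝ)) ≤ u mstar ((0 : ℝ), (1 : ℝ)) ∧
        u a ((0 : ℝ), (0 : ℝ)) ≤ u ((0 : ℝ), (0 : ℝ)) ((0 : ℝ), (0 : ℝ)) ∧
        u a ((1 : ℝ), (1 : ℝ)) ≤ u ((1 : ℝ), (1 : ℝ)) ((1 : ℝ), (1 : ℝ))) ↔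
      (Real.sqrt 2 - 1 ≤ p / q ∧ p / q ≤ 1 / (Real.sqrt 2 - 1)) := by
  have hpq : 0 < p + q := by positivity
  obtain ⟨x, hx⟩ : ∃ x, x = p / (p + q) := ⟨_, rfl⟩
  obtain ⟨y, hy⟩ : ∃ y, y = q / (p + q) := ⟨_, rfl⟩
  have hx0 : 0 < x := by rw [hx]; positivity
  have hy0 : 0 < y := by rw [hy]; positivity
  have hxy : x = 1 - y := by rw [hx, hy]; field_simp; ring
  have hs2 : Real.sqrt 2 ^ 2 = 2 := Real.sq_sqrt (by norm_num)
  have hs0 : 0 ≤ Real.sqrt 2 := Real.sqrt_nonneg 2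
  have hs1 : 0 < Real.sqrt 2 - 1 := by nlinarith
  have hr : p / q = x / y := by rw [hx, hy]; field_simp
  rw [← hx, ← hy] at hm
  rw [hr, le_div_iff₀ hy0, div_le_div_iff₀ hy0 hs1]
  have key : ∀ t : ℝ, 0 < t → (2 * t ^ 2 ≤ 1 ↔ Real.sqrt 2 * t ≤ 1) := by
    intro t ht
    have h0 : 0 ≤ Real.sqrt 2 * t := by positivity
    have h1 : (Real.sqrt 2 * t) ^ 2 = 2 * t ^ 2 := by rw [mul_pow, hs2]
    rw [← h1]
    exact sq_le_one_iff₀ h0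
  have kx := key x hx0
  have ky := key y hy0
  subst hA hm
  simp only [Set.mem_insert_iff, Set.mem_singleton_iff, forall_eq_or_imp, forall_eq, hu]
  constructor
  · rintro ⟨⟨h1, h2, -⟩, -⟩
    have a1 := ky.1 (by rw [hxy] at h1; nlinarith)
    have a2 := kx.1 (by
      have : y = 1 - x := by linarith
      rw [this] at h2; nlinarith)
    constructor <;> nlinarith
  · rintro ⟨h1, h2⟩
    have a1 := ky.2 (by nlinarith)
    have a2 := kx.2 (by nlinarith)
    have e : y = 1 - x := by linarith
    have b1 : (x - 1) ^ 2 = y ^ 2 := by rw [e]; ring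
    have b2 : (y - 1) ^ 2 = x ^ 2 := by rw [e]; ring
    refine ⟨⟨?_, ?_, ?_, ?_⟩, ⟨?_, ?_, ?_, ?_⟩, ⟨?_, ?_, ?_, ?_⟩⟩ <;>
      nlinarith [sq_nonneg x, sq_nonneg y]
end

section
/- Let φ > 0 and σ₁, σ₂, σ₁₂ ∈ ℝ with σ₁₂ ≠ 0. Let Σ be the 2×2 matrix with rows (σ₁², σ₁₂) and (σ₁₂, σ₂²), and Φ the 2×2 diagonal matrix diag(φ, 1). Define r⁺ = (φσ₁² − σ₂² + √((φσ₁² − σ₂²)² + 4φσ₁₂²)) / (2σ₁₂) and r⁻ = (φσ₁² − σ₂² − √((φσ₁² − σ₂²)² + 4φσ₁₂²)) / (2σ₁₂). Then r⁺ ≠ 0 and r⁻ ≠ 0, the vectors β⁺ = (r⁺, 1) and β⁻ = (r⁻, 1) are eigenvectors of ΦΣ with distinct eigenvalues, and every eigenvector of ΦΣ is a nonzero scalar multiple of β⁺ or of β⁻. -/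
open Matrix

/-- Corollary, correlated case: with `σ₁₂ ≠ 0`, the ratios `r⁺, r⁻` are
nonzero, `(r⁺,1)` and `(r⁻,1)` are eigenvectors of `ΦΣ` with distinct eigenvalues, and
every eigenvector of `ΦΣ` is a nonzero scalar multiple of one of them. -/
theorem stmt_14 (φ σ₁ σ₂ σ₁₂ : ℝ) (hφ : 0 < φ) (h12 : σ₁₂ ≠ 0)
    (S Φm : Matrix (Fin 2) (Fin 2) ℝ)
    (hS : S = !![σ₁ ^ 2, σ₁₂; σ₁₂, σ₂ ^ 2])
    (hΦ : Φm = !![φ, 0; 0, 1])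
    (rp rm : ℝ)
    (hrp : rp = (φ * σ₁ ^ 2 - σ₂ ^ 2 +
        Real.sqrt ((φ * σ₁ ^ 2 - σ₂ ^ 2) ^ 2 + 4 * φ * σ₁₂ ^ 2)) / (2 * σ₁₂))
    (hrm : rm = (φ * σ₁ ^ 2 - σ₂ ^ 2 -
        Real.sqrt ((φ * σ₁ ^ 2 - σ₂ ^ 2) ^ 2 + 4 * φ * σ₁₂ ^ 2)) / (2 * σ₁₂)) :
    rp ≠ 0 ∧ rm ≠ 0 ∧
    (∃ lp lm : ℝ, lp ≠ lm ∧
      (Φm * S).mulVec ![rp, 1] = lp • ![rp, 1] ∧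
      (Φm * S).mulVec ![rm, 1] = lm • ![rm, 1]) ∧
    (∀ β : Fin 2 → ℝ, β ≠ 0 → (∃ lam : ℝ, (Φm * S).mulVec β = lam • β) →
      ∃ c : ℝ, c ≠ 0 ∧ (β = c • ![rp, 1] ∨ β = c • ![rm, 1])) := by
  set D := φ * σ₁ ^ 2 - σ₂ ^ 2 with hD
  have hpos : 0 < D ^ 2 + 4 * φ * σ₁₂ ^ 2 := by positivity
  have hs := Real.sqrt_pos.mpr hpos
  have hsq := Real.sq_sqrt hpos.le
  set s := Real.sqrt (D ^ 2 + 4 * φ * σ₁₂ ^ 2) with hsdef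
  have e1 : 2 * σ₁₂ * rp = D + s := by rw [hrp]; field_simp
  have e2 : 2 * σ₁₂ * rm = D - s := by rw [hrm]; field_simp
  have hsum : σ₁₂ * (rp + rm) = D := by linarith
  have hdiff : σ₁₂ * (rp - rm) = s := by linarith
  have hprod : rp * rm = -φ := by
    have h4 : 4 * σ₁₂ ^ 2 ≠ 0 := by positivity
    apply mul_left_cancel₀ h4
    have : (2 * σ₁₂ * rp) * (2 * σ₁₂ * rm) = (D + s) * (D - s) := by rw [e1, e2]
    linear_combination this - hsq
  clear_value s D
  subst hS hΦ
  have key : ∀ x y : ℝ, (!![φ, 0; 0, 1] * !![σ₁ ^ 2, σ₁₂; σ₁₂, σ₂ ^ 2]).mulVec ![x, y]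
      = ![φ * σ₁ ^ 2 * x + φ * σ₁₂ * y, σ₁₂ * x + σ₂ ^ 2 * y] := by
    intro x y
    ext i
    fin_cases i <;> simp [Matrix.mulVec, dotProduct, Fin.sum_univ_two]
  refine ⟨?_, ?_, ⟨σ₁₂ * rp + σ₂ ^ 2, σ₁₂ * rm + σ₂ ^ 2, ?_, ?_, ?_⟩, ?_⟩
  · rintro h
    rw [h] at hprod
    linarith
  · rintro h
    rw [h] at hprod
    linarith
  · intro h
    linarith
  · rw [key]
    ext i
    fin_cases i
    · simp
      linear_combination (-rp) * hsum + σ₁₂ * hprod - rp * hD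
    · simp
  · rw [key]
    ext i
    fin_cases i
    · simp
      linear_combination (-rm) * hsum + σ₁₂ * hprod - rm * hD
    · simp
  · rintro β hβ ⟨lam, hl⟩
    obtain ⟨x, y, rfl⟩ : ∃ x y, β = ![x, y] :=
      ⟨β 0, β 1, by ext i; fin_cases i <;> rfl⟩
    rw [key] at hl
    have h0 : φ * σ₁ ^ 2 * x + φ * σ₁₂ * y = lam * x := by simpa using congrFun hl 0
    have h1 : σ₁₂ * x + σ₂ ^ 2 * y = lam * y := by simpa using congrFun hl 1
    have hy : y ≠ 0 := by
      rintro rfl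
      have : x = 0 := by simpa [h12] using h1
      apply hβ
      ext i
      fin_cases i <;> simp [this]
    have hf : σ₁₂ * ((x - rp * y) * (x - rm * y)) = 0 := by
      linear_combination x * h1 - y * h0 - x * y * hsum + σ₁₂ * y ^ 2 * hprod - x * y * hD
    refine ⟨y, hy, ?_⟩
    rcases mul_eq_zero.mp ((mul_eq_zero.mp hf).resolve_left h12) with h | h
    · left
      ext i
      fin_cases i
      · simp
        linarith
      · simp
    · right
      ext i
      fin_cases i
      · simp
        linarith
      · simp
end

section
/- Let (Ω, F, P) be a probability space, n ≥ 1, and θ : Ω → ℝⁿ a random vector with E‖θ‖² < ∞, E[θ] = 0, and covariance matrix Σ = E[θθᵀ]. Let Φ be a diagonal real n×n matrix with positive diagonal entries and let β ∈ ℝⁿ with βᵀΣβ ≠ 0. Define s = βᵀθ and the action a = (Σβ/(βᵀΣβ))·s. Then E[ −(a−θ)ᵀΦ(a−θ) ] = −tr(ΦΣ) + (βᵀΣΦΣβ)/(βᵀΣβ). -/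
open Matrix MeasureTheory

/-- ex-ante payoff of a linear score with the regression best reply:
if `θ` is a centered random vector with covariance `Σ`, `s = βᵀθ` and
`a = (Σβ/(βᵀΣβ))·s`, then `E[−(a−θ)ᵀΦ(a−θ)] = −tr(ΦΣ) + βᵀΣΦΣβ/(βᵀΣβ)`. -/
theorem stmt_17 {Ω : Type*} [MeasurableSpace Ω] (P : Measure Ω) [IsProbabilityMeasure P]
    (n : ℕ) (hn : 1 ≤ n)
    (θ : Ω → (Fin n → ℝ)) (hmeas : Measurable θ)
    (hmom : Integrable (fun ω => ∑ i, (θ ω i) ^ 2) P)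
    (hmean : ∀ i, ∫ ω, θ ω i ∂P = 0)
    (S : Matrix (Fin n) (Fin n) ℝ)
    (hS : ∀ i j, S i j = ∫ ω, θ ω i * θ ω j ∂P)
    (Φm : Matrix (Fin n) (Fin n) ℝ)
    (d : Fin n → ℝ) (hΦ : Φm = Matrix.diagonal d) (hd : ∀ i, 0 < d i)
    (β : Fin n → ℝ) (hβ : β ⬝ᵥ S.mulVec β ≠ 0)
    (s : Ω → ℝ) (hs : ∀ ω, s ω = β ⬝ᵥ θ ω)
    (a : Ω → (Fin n → ℝ))
    (ha : ∀ ω, a ω = ((β ⬝ᵥ S.mulVec β)⁻¹ * s ω) • S.mulVec β) :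
    ∫ ω, -((a ω - θ ω) ⬝ᵥ Φm.mulVec (a ω - θ ω)) ∂P =
      -(Φm * S).trace + (β ⬝ᵥ (S * Φm * S).mulVec β) / (β ⬝ᵥ S.mulVec β) := by
  have hm : ∀ i, Measurable (fun ω => θ ω i) := fun i => (measurable_pi_apply i).comp hmeas
  have hint : ∀ i j, Integrable (fun ω => θ ω i * θ ω j) P := by
    intro i j
    refine hmom.mono' ((hm i).mul (hm j)).aestronglyMeasurable ?_
    refine Filter.Eventually.of_forall fun ω => ?_
    have h1 : (θ ω i) ^ 2 ≤ ∑ k, (θ ω k) ^ 2 :=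
      Finset.single_le_sum (f := fun k => (θ ω k) ^ 2) (fun k _ => sq_nonneg _) (Finset.mem_univ i)
    have h2 : (θ ω j) ^ 2 ≤ ∑ k, (θ ω k) ^ 2 :=
      Finset.single_le_sum (f := fun k => (θ ω k) ^ 2) (fun k _ => sq_nonneg _) (Finset.mem_univ j)
    rw [Real.norm_eq_abs, abs_le]
    constructor <;> nlinarith [sq_nonneg (θ ω i + θ ω j), sq_nonneg (θ ω i - θ ω j)]
  have hsym : Sᵀ = S := by
    ext i j
    simp only [Matrix.transpose_apply, hS, mul_comm]
  have hts : ∀ i, (fun ω => θ ω i * s ω) = fun ω => ∑ j, β j * (θ ω i * θ ω j) := by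
    intro i
    funext ω
    rw [hs, dotProduct, Finset.mul_sum]
    exact Finset.sum_congr rfl fun j _ => by ring
  have hti : ∀ i, Integrable (fun ω => θ ω i * s ω) P := by
    intro i
    rw [hts]
    exact integrable_finsetSum _ fun j _ => (hint i j).const_mul _
  have htv : ∀ i, ∫ ω, θ ω i * s ω ∂P = S.mulVec β i := by
    intro i
    rw [hts, integral_finsetSum _ fun j _ => (hint i j).const_mul _]
    simp only [integral_const_mul, ← hS, Matrix.mulVec, dotProduct]
    exact Finset.sum_congr rfl fun j _ => by ring
  have hss : (fun ω => s ω ^ 2) = fun ω => ∑ i, β i * (θ ω i * s ω) := by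
    funext ω
    rw [sq]
    nth_rewrite 1 [hs]
    rw [dotProduct, Finset.sum_mul]
    exact Finset.sum_congr rfl fun j _ => by ring
  have hsi : Integrable (fun ω => s ω ^ 2) P := by
    rw [hss]
    exact integrable_finsetSum _ fun j _ => (hti j).const_mul _
  have hsv : ∫ ω, s ω ^ 2 ∂P = β ⬝ᵥ S.mulVec β := by
    rw [hss, integral_finsetSum _ fun j _ => (hti j).const_mul _]
    simp only [integral_const_mul, htv, dotProduct]
  have hquad : β ⬝ᵥ (S * Φm * S).mulVec β = ∑ i, d i * (S.mulVec β i) ^ 2 := by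
    rw [← Matrix.mulVec_mulVec, ← Matrix.mulVec_mulVec, Matrix.dotProduct_mulVec,
      ← Matrix.mulVec_transpose, hsym, hΦ, dotProduct]
    refine Finset.sum_congr rfl fun i _ => ?_
    rw [Matrix.mulVec_diagonal]
    ring
  have htr : (Φm * S).trace = ∑ i, d i * S i i := by
    simp [hΦ, Matrix.trace, Matrix.diagonal_mul]
  rw [hquad, htr]
  generalize hv : S.mulVec β = v at *
  generalize hq : β ⬝ᵥ v = q at *
  have hI : (fun ω => -((a ω - θ ω) ⬝ᵥ Φm.mulVec (a ω - θ ω))) = fun ω => ∑ i,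
      ((-(d i * q⁻¹ ^ 2 * v i ^ 2)) * s ω ^ 2 + (2 * d i * q⁻¹ * v i) * (θ ω i * s ω)
        + (-d i) * (θ ω i * θ ω i)) := by
    funext ω
    rw [hΦ, dotProduct, ← Finset.sum_neg_distrib]
    refine Finset.sum_congr rfl fun i _ => ?_
    rw [Matrix.mulVec_diagonal, ha]
    simp only [Pi.sub_apply, Pi.smul_apply, smul_eq_mul]
    ring
  have i1 := fun i => hsi.const_mul (-(d i * q⁻¹ ^ 2 * v i ^ 2))
  have i2 := fun i => (hti i).const_mul (2 * d i * q⁻¹ * v i)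
  have i3 := fun i => (hint i i).const_mul (-d i)
  rw [hI, integral_finsetSum]
  swap
  · exact fun i _ => ((i1 i).add (i2 i)).add (i3 i)
  rw [Finset.sum_div, ← Finset.sum_neg_distrib, ← Finset.sum_add_distrib]
  refine Finset.sum_congr rfl fun i _ => ?_
  have e1 := integral_add ((i1 i).add (i2 i)) (i3 i)
  have e2 := integral_add (i1 i) (i2 i)
  simp only [Pi.add_apply] at e1 e2
  rw [e1, e2, integral_const_mul, integral_const_mul, integral_const_mul, hsv, htv, ← hS]
  field_simp
  ring
end
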